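/- Let x ∈ B_n have left normal form x = Δ^p x_1⋯x_r. Then the minimal length |x| of a word representing x in the alphabet of simple elements and their inverses equals max(|p|, r, p + r); in particular the canonical length satisfies ℓ(x) ≤ |x|. -/

import Mathlib

namespace Braids

/-- The braid relations on `n` strands (Artin generators `σ_i`, `i : Fin (n-1)`):
`σ_i σ_j σ_i = σ_j σ_i σ_j` for `|i-j| = 1` and `σ_i σ_j = σ_j σ_i` for `|i-j| ≥ 2`. -/
def braidRels (n : ℕ) : Set (FreeGroup (Fin (n - 1))) :=
  {r | (∃ i j : Fin (n - 1), (i : ℕ) + 1 = (j : ℕ) ∧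
          r = .of i * .of j * .of i * (.of j * .of i * .of j)⁻¹) ∨
       (∃ i j : Fin (n - 1), (i : ℕ) + 2 ≤ (j : ℕ) ∧
          r = .of i * .of j * (.of j * .of i)⁻¹)}

/-- The braid group on `n` strands. -/
abbrev Braid (n : ℕ) := PresentedGroup (braidRels n)

/-- The Artin generator `σ_i` of the braid group on `n` strands. -/
def σ {n : ℕ} (i : Fin (n - 1)) : Braid n := PresentedGroup.of i

/-- The Artin generator, with out-of-range indices mapped to `1`. -/
def σ' (n : ℕ) (i : ℕ) : Braid n := if h : i < n - 1 then σ ⟨i, h⟩ else 1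

/-- The monoid of positive braids. -/
def Pos (n : ℕ) : Submonoid (Braid n) := Submonoid.closure (Set.range (σ (n := n)))

/-- The prefix order: `x ≼ y` iff `x⁻¹ * y` is a positive braid. -/
def PrefixLE {n : ℕ} (x y : Braid n) : Prop := x⁻¹ * y ∈ Pos n

/-- The Garside half-twist `Δ = σ₁(σ₂σ₁)(σ₃σ₂σ₁)⋯(σ_{n-1}⋯σ₁)` (0-based indices). -/
def Δ (n : ℕ) : Braid n :=
  ((((List.range (n - 1)).map fun k => (List.range (k + 1)).reverse).flatten).map (σ' n)).prod

/-- A braid is simple (a positive permutation braid) if it is a positive prefix of `Δ`. -/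
def IsSimple {n : ℕ} (s : Braid n) : Prop := s ∈ Pos n ∧ PrefixLE s (Δ n)

/-- A letter of the alphabet consisting of simple elements and their inverses. -/
def SimpleOrInv {n : ℕ} (a : Braid n) : Prop := IsSimple a ∨ IsSimple a⁻¹

/-- `len x` is `|x|`: the minimal length of a word representing `x` whose letters are
simple elements and their inverses. -/
noncomputable def len {n : ℕ} (x : Braid n) : ℕ :=
  sInf {k | ∃ l : List (Braid n), (∀ a ∈ l, SimpleOrInv a) ∧ l.prod = x ∧ l.length = k}

open scoped Classical

/-- A pair of simple elements `(a, b)` is left-weighted if for every non-trivial positive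
prefix `t` of `b`, the product `a * t` is not simple. -/
def LeftWeighted {n : ℕ} (a b : Braid n) : Prop :=
  ∀ t : Braid n, t ∈ Pos n → PrefixLE t b → t ≠ 1 → ¬IsSimple (a * t)

/-- `InfIs x p` says `p = inf(x) = max {m : ℤ | Δ^m ≼ x}`. -/
def InfIs {n : ℕ} (x : Braid n) (p : ℤ) : Prop :=
  PrefixLE (Δ n ^ p) x ∧ ¬PrefixLE (Δ n ^ (p + 1)) x

/-- `IsNormalForm x p l` says that `Δ^p * l.prod` is the left normal form of `x`:
`p = inf(x)`, the factors are simple, the last factor is non-trivial, and consecutive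
pairs of factors are left-weighted.  The canonical length is `ℓ(x) = l.length`. -/
def IsNormalForm {n : ℕ} (x : Braid n) (p : ℤ) (l : List (Braid n)) : Prop :=
  x = Δ n ^ p * l.prod ∧ InfIs x p ∧ (∀ s ∈ l, IsSimple s) ∧
    l.getLast? ≠ some 1 ∧ List.Chain' LeftWeighted l

/-- The canonical length `ℓ(x)`: the number of simple factors in the left normal form. -/
noncomputable def clen {n : ℕ} (x : Braid n) : ℕ :=
  sInf {r | ∃ p l, IsNormalForm x p l ∧ l.length = r}

/-- `InSSS x y` : `y` belongs to the Super Summit Set of `x`, i.e. `y` is a conjugate of `x`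
of minimal canonical length among all conjugates of `x`. -/
def InSSS {n : ℕ} (x y : Braid n) : Prop :=
  IsConj x y ∧ ∀ z : Braid n, IsConj x z → clen y ≤ clen z

/-- `IsPreferredPrefix x t` : `t` is the preferred prefix `𝔭(x)`.  If `x = Δ^p x₁ ⋯ x_r`
is in left normal form with `r > 0`, then `t` is the maximal positive prefix of
`τ^{-p}(x₁) = Δ^p x₁ Δ^{-p}` such that `x_r * t` is simple; if `r = 0` then `t = 1`. -/
def IsPreferredPrefix {n : ℕ} (x t : Braid n) : Prop :=
  ∃ p l, IsNormalForm x p l ∧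
    ((l = [] ∧ t = 1) ∨
      ∃ x₁ xr : Braid n, l.head? = some x₁ ∧ l.getLast? = some xr ∧
        t ∈ Pos n ∧ PrefixLE t (Δ n ^ p * x₁ * (Δ n ^ p)⁻¹) ∧ IsSimple (xr * t) ∧
        ∀ t' : Braid n, t' ∈ Pos n → PrefixLE t' (Δ n ^ p * x₁ * (Δ n ^ p)⁻¹) →
          IsSimple (xr * t') → PrefixLE t' t)

/-- Cyclic sliding: conjugation of `x` by its preferred prefix `𝔭(x)`. -/
noncomputable def slide {n : ℕ} (x : Braid n) : Braid n :=
  if h : ∃ t, IsPreferredPrefix x t then h.choose⁻¹ * x * h.choose else x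

/-- A braid is rigid if its preferred prefix is trivial. -/
def Rigid {n : ℕ} (x : Braid n) : Prop := IsPreferredPrefix x 1

/-!
A word of length `m` with `t` letters inverse to simple elements represents an element `x` with
`Δ ^ (-t) ≼ x ≼ Δ ^ (m - t)`. The first relation gives `-t ≤ p`. As a product of `r` left-weighted
factors, the last one non-trivial, is not a prefix of `Δ ^ k` for `k < r`, the second one gives
`p + r ≤ m - t`. Together with `0 ≤ t ≤ m` this is the lower bound on `m`. It is attained by the
normal form itself, after merging letters `Δ⁻¹` with the first factors if `p < 0`.

These arguments need least common multiples in the braid monoid. They exist, and the monoid is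
cancellative, by Garside's key lemma: in an Artin monoid of type `A`, any equality `σ_i a = σ_j b`
comes from the defining relation between `σ_i` and `σ_j`. Since `Δ ^ 2` is central and every
positive braid divides a power of it, inverting `Δ ^ 2` embeds the monoid in a group, hence in the
braid group.
-/

/-! ### Garside elements of groups -/

namespace Garside

section Definitions

variable {G : Type*} [Group G] (P : Submonoid G) (d : G)

/-- The prefix order `x ≼ y` of a group with respect to a monoid `P` of positive elements. -/
def IsPrefix (x y : G) : Prop := x⁻¹ * y ∈ P

/-- The simple elements: the positive prefixes of `d`. -/
def IsSimple (s : G) : Prop := s ∈ P ∧ IsPrefix P s d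

/-- The letters of the words measured by `Garside.len`. -/
def SimpleOrInv (a : G) : Prop := IsSimple P d a ∨ IsSimple P d a⁻¹

/-- The word length with respect to the simple elements and their inverses. -/
noncomputable def len (x : G) : ℕ :=
  sInf {k | ∃ l : List G, (∀ a ∈ l, SimpleOrInv P d a) ∧ l.prod = x ∧ l.length = k}

/-- Left-weighted pairs: no non-trivial prefix of `b` can be moved into `a` keeping it simple. -/
def LeftWeighted (a b : G) : Prop :=
  ∀ t : G, t ∈ P → IsPrefix P t b → t ≠ 1 → ¬IsSimple P d (a * t)

/-- `InfIs P d x p` says that `p` is the infimum of `x`, the largest exponent with `d ^ p ≼ x`. -/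
def InfIs (x : G) (p : ℤ) : Prop :=
  IsPrefix P (d ^ p) x ∧ ¬IsPrefix P (d ^ (p + 1)) x

/-- `IsNormalForm P d x p l` says that `d ^ p * l.prod` is the left normal form of `x`. The
infimum of `x` being `p` excludes `d` from the factors, so only the last one must be required
to be non-trivial. -/
def IsNormalForm (x : G) (p : ℤ) (l : List G) : Prop :=
  x = d ^ p * l.prod ∧ InfIs P d x p ∧ (∀ s ∈ l, IsSimple P d s) ∧
    l.getLast? ≠ some 1 ∧ l.IsChain (LeftWeighted P d)

/-- The order-theoretic properties of the half-twist: `d` is positive and normalizes `P`, the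
prefix order is antisymmetric, and any two positive elements have a least common upper bound for
it. -/
structure IsGarsideElement : Prop where
  mem : d ∈ P
  mem_normalizer : d ∈ Subgroup.normalizer (P : Set G)
  eq_one_of_inv_mem : ∀ {a : G}, a ∈ P → a⁻¹ ∈ P → a = 1
  exists_lcm : ∀ {a b : G}, a ∈ P → b ∈ P →
    ∃ c, ∀ z, IsPrefix P c z ↔ IsPrefix P a z ∧ IsPrefix P b z

end Definitions

variable {G : Type*} [Group G] {P : Submonoid G} {d x y z : G}

theorem IsPrefix.refl (x : G) : IsPrefix P x x := by simp [IsPrefix]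

theorem IsPrefix.trans (hxy : IsPrefix P x y) (hyz : IsPrefix P y z) : IsPrefix P x z := by
  simpa [IsPrefix, mul_assoc] using mul_mem hxy hyz

theorem isPrefix_mul_left_iff : IsPrefix P (z * x) (z * y) ↔ IsPrefix P x y := by
  simp [IsPrefix, mul_assoc]

theorem isPrefix_mul_iff : IsPrefix P (z * x) y ↔ IsPrefix P x (z⁻¹ * y) := by
  simp [IsPrefix, mul_assoc]

theorem isPrefix_self_mul_iff : IsPrefix P x (x * y) ↔ y ∈ P := by
  simp [IsPrefix]

theorem one_isPrefix_iff : IsPrefix P 1 x ↔ x ∈ P := by simp [IsPrefix]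

theorem len_le {l : List G} (hl : ∀ a ∈ l, SimpleOrInv P d a) : len P d l.prod ≤ l.length :=
  Nat.sInf_le ⟨l, hl, rfl, rfl⟩

theorem exists_word_length_eq_len {l : List G} (hl : ∀ a ∈ l, SimpleOrInv P d a) :
    ∃ w : List G, (∀ a ∈ w, SimpleOrInv P d a) ∧ w.prod = l.prod ∧
      w.length = len P d l.prod :=
  Nat.sInf_mem
    (s := {k | ∃ w : List G, (∀ a ∈ w, SimpleOrInv P d a) ∧ w.prod = l.prod ∧ w.length = k})
    ⟨l.length, l, hl, rfl, rfl⟩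

namespace IsGarsideElement

variable (h : IsGarsideElement P d)
include h

theorem eq_one_of_mul_eq_one {a b : G} (ha : a ∈ P) (hb : b ∈ P) (hab : a * b = 1) : b = 1 :=
  h.eq_one_of_inv_mem hb (inv_eq_of_mul_eq_one_left hab ▸ ha)

theorem conj_zpow_mem_iff (k : ℤ) : d ^ k * x * (d ^ k)⁻¹ ∈ P ↔ x ∈ P :=
  (zpow_mem h.mem_normalizer k x).symm

theorem isPrefix_mul_zpow_iff (k : ℤ) :
    IsPrefix P (x * d ^ k) (y * d ^ k) ↔ IsPrefix P x y := by
  simpa [IsPrefix, mul_assoc] using h.conj_zpow_mem_iff (x := x⁻¹ * y) (-k)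

theorem isPrefix_mul_self (hx : x ∈ P) : IsPrefix P d (x * d) := by
  simpa using (h.isPrefix_mul_zpow_iff 1).2 (one_isPrefix_iff.2 hx)

theorem zpow_isPrefix_zpow {i j : ℤ} (hij : i ≤ j) : IsPrefix P (d ^ i) (d ^ j) := by
  obtain ⟨k, rfl⟩ := Int.le.dest hij
  simpa [zpow_add, isPrefix_self_mul_iff] using pow_mem h.mem k

theorem nonneg_of_zpow_mem (hd : d ≠ 1) {k : ℤ} (hk : d ^ k ∈ P) : 0 ≤ k := by
  by_contra! hneg
  have hpow : d ^ (-k - 1) ∈ P := by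
    simpa [one_isPrefix_iff] using h.zpow_isPrefix_zpow (i := 0) (j := -k - 1) (by lia)
  exact hd (h.eq_one_of_mul_eq_one (mul_mem hk hpow) h.mem (by group))

theorem isSimple_self : IsSimple P d d := ⟨h.mem, .refl d⟩

theorem isSimple_inv_mul_self {s : G} (hs : IsSimple P d s) : IsSimple P d (s⁻¹ * d) :=
  ⟨hs.2, by simpa [isPrefix_mul_iff] using h.isPrefix_mul_self hs.1⟩

theorem isSimple_conj_zpow {s : G} (hs : IsSimple P d s) (k : ℤ) :
    IsSimple P d (d ^ k * s * (d ^ k)⁻¹) := by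
  refine ⟨(h.conj_zpow_mem_iff k).2 hs.1, ?_⟩
  rw [← h.isPrefix_mul_zpow_iff k, inv_mul_cancel_right, (Commute.refl d).zpow_right k,
    isPrefix_mul_left_iff]
  exact hs.2

theorem isSimple_inv_mul {s t : G} (hs : s ∈ P) (hst : IsPrefix P s t) (ht : IsSimple P d t) :
    IsSimple P d (s⁻¹ * t) :=
  ⟨hst, isPrefix_mul_iff.2 (by simpa using ht.2.trans (h.isPrefix_mul_self hs))⟩

theorem isPrefix_head {s : G} {l : List G} (hl : ∀ a ∈ s :: l, IsSimple P d a)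
    (hchain : (s :: l).IsChain (LeftWeighted P d)) {u : G} (hu : IsSimple P d u)
    (hul : IsPrefix P u (s :: l).prod) : IsPrefix P u s := by
  induction l generalizing s u with
  | nil => simpa using hul
  | cons t l ih =>
    have hs := hl s List.mem_cons_self
    obtain ⟨c, hc⟩ := h.exists_lcm hs.1 hu.1
    obtain ⟨hsc, huc⟩ := (hc c).1 (.refl c)
    have hcs : IsSimple P d c := ⟨by simpa using mul_mem hs.1 hsc, (hc d).2 ⟨hs.2, hu.2⟩⟩
    have hsl : IsPrefix P s (s :: t :: l).prod := by
      rw [List.prod_cons, isPrefix_self_mul_iff]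
      exact list_prod_mem fun a ha => (hl a (List.mem_cons_of_mem s ha)).1
    have hct : IsPrefix P (s⁻¹ * c) t :=
      ih (fun a ha => hl a (List.mem_cons_of_mem s ha)) hchain.tail
        (h.isSimple_inv_mul hs.1 hsc hcs)
        (by simpa [isPrefix_mul_iff] using (hc _).2 ⟨hsl, hul⟩)
    have hcs' : s⁻¹ * c = 1 := by
      by_contra hne
      exact (List.isChain_cons_cons.1 hchain).1 _ hsc hct hne (by simpa using hcs)
    rwa [inv_mul_eq_one.1 hcs']

theorem self_isPrefix_mul_head {s : G} {l : List G} (hl : ∀ a ∈ s :: l, IsSimple P d a)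
    (hchain : (s :: l).IsChain (LeftWeighted P d)) {u : G} (hu : u ∈ P)
    (hdl : IsPrefix P d (u * (s :: l).prod)) : IsPrefix P d (u * s) := by
  obtain ⟨c, hc⟩ := h.exists_lcm hu h.mem
  obtain ⟨huc, hdc⟩ := (hc c).1 (.refl c)
  have hcs : IsSimple P d (u⁻¹ * c) := by
    refine ⟨huc, isPrefix_mul_iff.2 ?_⟩
    rw [inv_inv, hc, isPrefix_self_mul_iff]
    exact ⟨h.mem, h.isPrefix_mul_self hu⟩
  have hprod : (s :: l).prod ∈ P := list_prod_mem fun a ha => (hl a ha).1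
  have hcl : IsPrefix P c (u * (s :: l).prod) := (hc _).2 ⟨isPrefix_self_mul_iff.2 hprod, hdl⟩
  have hcs' : IsPrefix P (u⁻¹ * c) s :=
    h.isPrefix_head hl hchain hcs (isPrefix_mul_iff.2 (by rwa [inv_inv]))
  exact hdc.trans (by simpa [isPrefix_mul_iff] using hcs')

theorem length_le_of_mul_prod_eq_pow {l : List G} (hl : ∀ s ∈ l, IsSimple P d s)
    (hlast : l.getLast? ≠ some 1) (hchain : l.IsChain (LeftWeighted P d)) {u : G} (hu : u ∈ P)
    {k : ℕ} (hk : u * l.prod = d ^ k) : l.length ≤ k := by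
  induction k generalizing l u with
  | zero =>
    rcases l.eq_nil_or_concat with rfl | ⟨l, s, rfl⟩
    · rfl
    have hul : u * l.prod ∈ P :=
      mul_mem hu (list_prod_mem fun a ha => (hl a (by simp [ha])).1)
    have hs : s = 1 := h.eq_one_of_mul_eq_one hul (hl s (by simp)).1
      (by simpa [mul_assoc] using hk)
    simp [hs] at hlast
  | succ k ih =>
    rcases l with _ | ⟨s, l⟩
    · simp
    have hd : IsPrefix P d (u * s) := h.self_isPrefix_mul_head hl hchain hu <| by
      rw [hk, pow_succ', isPrefix_self_mul_iff]
      exact pow_mem h.mem k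
    have hlast' : l.getLast? ≠ some 1 := by
      rcases l with _ | ⟨t, l⟩
      · simp
      · rwa [List.getLast?_cons_cons] at hlast
    refine Nat.succ_le_succ (ih (fun a ha => hl a (List.mem_cons_of_mem s ha)) hlast'
      hchain.tail hd ?_)
    rw [mul_assoc, mul_assoc, ← List.prod_cons, hk, pow_succ', inv_mul_cancel_left]

theorem length_le_of_prod_isPrefix_zpow (hd : d ≠ 1) {l : List G}
    (hl : ∀ s ∈ l, IsSimple P d s) (hlast : l.getLast? ≠ some 1)
    (hchain : l.IsChain (LeftWeighted P d)) {k : ℤ} (hk : IsPrefix P l.prod (d ^ k)) :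
    (l.length : ℤ) ≤ k := by
  have hprod : l.prod ∈ P := list_prod_mem fun a ha => (hl a ha).1
  lift k to ℕ using
    h.nonneg_of_zpow_mem hd (one_isPrefix_iff.1 ((one_isPrefix_iff.2 hprod).trans hk))
  exact_mod_cast h.length_le_of_mul_prod_eq_pow hl hlast hchain
    ((h.conj_zpow_mem_iff k).2 hk) (by group)

theorem mul_bounds {i j i' j' : ℤ} (hix : IsPrefix P (d ^ i) x) (hxj : IsPrefix P x (d ^ j))
    (hiy : IsPrefix P (d ^ i') y) (hyj : IsPrefix P y (d ^ j')) :
    IsPrefix P (d ^ (i + i')) (x * y) ∧ IsPrefix P (x * y) (d ^ (j + j')) := by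
  rw [zpow_add, zpow_add]
  exact ⟨((h.isPrefix_mul_zpow_iff i').2 hix).trans (isPrefix_mul_left_iff.2 hiy),
    (isPrefix_mul_left_iff.2 hyj).trans ((h.isPrefix_mul_zpow_iff j').2 hxj)⟩

theorem exists_bounds_of_simpleOrInv {a : G} (ha : SimpleOrInv P d a) :
    ∃ t : ℕ, t ≤ 1 ∧ IsPrefix P (d ^ (-t : ℤ)) a ∧ IsPrefix P a (d ^ (1 - t : ℤ)) := by
  rcases ha with ha | ha
  · exact ⟨0, zero_le_one, by simpa [one_isPrefix_iff] using ha.1, by simpa using ha.2⟩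
  · refine ⟨1, le_rfl, ?_, by simpa [IsPrefix] using ha.1⟩
    simpa [IsPrefix, mul_assoc] using (h.conj_zpow_mem_iff 1).2 ha.2

theorem exists_bounds_of_word {w : List G} (hw : ∀ a ∈ w, SimpleOrInv P d a) :
    ∃ t : ℕ, t ≤ w.length ∧ IsPrefix P (d ^ (-t : ℤ)) w.prod ∧
      IsPrefix P w.prod (d ^ (w.length - t : ℤ)) := by
  induction w with
  | nil => exact ⟨0, le_rfl, by simp [IsPrefix.refl], by simp [IsPrefix.refl]⟩
  | cons a w ih =>
    obtain ⟨s, hs, hsa, has⟩ := h.exists_bounds_of_simpleOrInv (hw a List.mem_cons_self)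
    obtain ⟨t, ht, htw, hwt⟩ := ih fun b hb => hw b (List.mem_cons_of_mem a hb)
    refine ⟨s + t, by simp only [List.length_cons]; lia, ?_⟩
    have hlower : (-(s + t : ℕ) : ℤ) = -s + -t := by push_cast; ring
    have hupper : ((a :: w).length - (s + t : ℕ) : ℤ) = 1 - s + (w.length - t) := by
      push_cast [List.length_cons]
      ring
    rw [List.prod_cons, hlower, hupper]
    exact h.mul_bounds hsa has htw hwt

theorem max_le_length_of_word {p : ℤ} {l w : List G} (hl : IsNormalForm P d w.prod p l)
    (hw : ∀ a ∈ w, SimpleOrInv P d a) :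
    max |p| (max (l.length : ℤ) (p + l.length)) ≤ w.length := by
  obtain ⟨hprod, ⟨hinf, hinf'⟩, hsimple, hlast, hchain⟩ := hl
  obtain ⟨t, ht, htw, hwt⟩ := h.exists_bounds_of_word hw
  have hd : d ≠ 1 := by
    rintro rfl
    exact hinf' (by simpa using hinf)
  have hp : -t ≤ p := by
    by_contra! hlt
    exact hinf' ((h.zpow_isPrefix_zpow (by lia)).trans htw)
  have hsup : (l.length : ℤ) ≤ -p + (w.length - t) := by
    refine h.length_le_of_prod_isPrefix_zpow hd hsimple hlast hchain ?_
    rwa [hprod, isPrefix_mul_iff, ← zpow_neg, ← zpow_add] at hwt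
  grind

/-- A letter `d⁻¹` and a factor `s` merge into one letter, as `d⁻¹ * s` is the inverse of the simple
element `s⁻¹ * d`. -/
theorem exists_word_pow_inv_mul (k : ℕ) {l : List G} (hl : ∀ s ∈ l, IsSimple P d s) :
    ∃ w : List G, (∀ a ∈ w, SimpleOrInv P d a) ∧ w.prod = (d ^ k)⁻¹ * l.prod ∧
      w.length = max k l.length := by
  induction l generalizing k with
  | nil =>
    exact ⟨List.replicate k d⁻¹, by simp [SimpleOrInv, h.isSimple_self], by simp, by simp⟩
  | cons s l ih =>
    rcases k with _ | k
    · exact ⟨s :: l, fun a ha => .inl (hl a ha), by simp, by simp⟩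
    obtain ⟨w, hw, hprod, hlen⟩ := ih k fun a ha => hl a (List.mem_cons_of_mem s ha)
    have ha : SimpleOrInv P d ((d ^ k)⁻¹ * (d⁻¹ * s) * d ^ k) := by
      refine .inr ?_
      simpa [mul_assoc] using
        h.isSimple_conj_zpow (h.isSimple_inv_mul_self (hl s List.mem_cons_self)) (-k)
    refine ⟨_ :: w, List.forall_mem_cons.2 ⟨ha, hw⟩, ?_, by simp [hlen]⟩
    simp [hprod, pow_succ', mul_assoc]

theorem exists_word_zpow_mul (p : ℤ) {l : List G} (hl : ∀ s ∈ l, IsSimple P d s) :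
    ∃ w : List G, (∀ a ∈ w, SimpleOrInv P d a) ∧ w.prod = d ^ p * l.prod ∧
      (w.length : ℤ) = max |p| (max (l.length : ℤ) (p + l.length)) := by
  obtain ⟨k, rfl | rfl⟩ := p.eq_nat_or_neg
  · refine ⟨List.replicate k d ++ l, ?_, by simp, ?_⟩
    · simp only [List.mem_append, List.mem_replicate]
      rintro a (⟨-, rfl⟩ | ha)
      exacts [.inl h.isSimple_self, .inl (hl a ha)]
    · simp
  · obtain ⟨w, hw, hprod, hlen⟩ := h.exists_word_pow_inv_mul k hl
    exact ⟨w, hw, by simpa using hprod, by simp [hlen]⟩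

end IsGarsideElement

end Garside

/-! ### Artin monoids -/

/-- `IsLcm a b c` says that `c` is a least common right multiple of `a` and `b`. -/
def IsLcm {M : Type*} [Monoid M] (a b c : M) : Prop := ∀ z, c ∣ z ↔ a ∣ z ∧ b ∣ z

theorem isLcm_one_left {M : Type*} [Monoid M] (a : M) : IsLcm 1 a a := fun z => by simp

theorem isLcm_one_right {M : Type*} [Monoid M] (a : M) : IsLcm a 1 a := fun z => by simp

section LeftCancelMonoid

variable {M : Type*} [Monoid M] [IsLeftCancelMul M] {a b c d p q u v w z : M}

theorem mul_dvd_mul_left_iff : a * b ∣ a * c ↔ b ∣ c := by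
  refine ⟨?_, mul_dvd_mul_left a⟩
  rintro ⟨x, hx⟩
  exact ⟨x, mul_left_cancel (hx.trans (mul_assoc a b x))⟩

theorem IsLcm.mul (huv : IsLcm u v w) (hup : u * p = w) (hvq : v * q = w)
    (hap : IsLcm a p (p * c)) (hbq : IsLcm b q (q * d)) (hcd : IsLcm c d z) :
    IsLcm (u * a) (v * b) (w * z) := by
  have hdvd : ∀ y, w * z ∣ w * y ↔ u * a ∣ w * y ∧ v * b ∣ w * y := by
    intro y
    have hu : u * a ∣ w * y ↔ c ∣ y := by
      simpa only [← hup, mul_assoc, mul_dvd_mul_left_iff, dvd_mul_right, and_true]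
        using (hap (p * y)).symm
    have hv : v * b ∣ w * y ↔ d ∣ y := by
      simpa only [← hvq, mul_assoc, mul_dvd_mul_left_iff, dvd_mul_right, and_true]
        using (hbq (q * y)).symm
    rw [mul_dvd_mul_left_iff, hcd, hu, hv]
  intro y
  constructor
  · intro h
    obtain ⟨y, rfl⟩ := dvd_of_mul_right_dvd h
    exact (hdvd y).1 h
  · intro h
    obtain ⟨y, rfl⟩ := (huv y).2 (h.imp dvd_of_mul_right_dvd dvd_of_mul_right_dvd)
    exact (hdvd y).2 h

end LeftCancelMonoid

section ArtinMonoid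

variable {ι : Type*} {G : SimpleGraph ι}

/-- The word `w` such that `i * w` spells the least common multiple of the generators `i` and `j`
of the Artin monoid of `G`. -/
noncomputable def complementWord (G : SimpleGraph ι) (i j : ι) : FreeMonoid ι :=
  if i = j then 1 else if G.Adj i j then .of j * .of i else .of j

/-- The relations `iji = jij` for adjacent `i, j` and `ij = ji` for non-adjacent ones. -/
inductive ArtinRel (G : SimpleGraph ι) : FreeMonoid ι → FreeMonoid ι → Prop
  | intro (i j : ι) :
      ArtinRel G (.of i * complementWord G i j) (.of j * complementWord G j i)

/-- The Artin monoid of the simply laced Coxeter diagram `G`. -/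
abbrev ArtinMonoid (G : SimpleGraph ι) := PresentedMonoid (ArtinRel G)

namespace ArtinMonoid

/-- The class of a word in the generators. -/
abbrev mk (G : SimpleGraph ι) : FreeMonoid ι →* ArtinMonoid G := PresentedMonoid.mk (ArtinRel G)

/-- The generators of the Artin monoid. -/
abbrev of (G : SimpleGraph ι) (i : ι) : ArtinMonoid G := PresentedMonoid.of (ArtinRel G) i

/-- The element with `of G i * complement G i j` the least common multiple of `of G i` and
`of G j`. -/
noncomputable abbrev complement (G : SimpleGraph ι) (i j : ι) : ArtinMonoid G :=
  mk G (complementWord G i j)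

variable {i j k : ι}

theorem complement_self (i : ι) : complement G i i = 1 := by
  simp [complement, complementWord]

theorem complement_of_adj (h : G.Adj i j) : complement G i j = of G j * of G i := by
  simp [complement, complementWord, h.ne, h, PresentedMonoid.of]

theorem complement_of_not_adj (hij : i ≠ j) (h : ¬G.Adj i j) : complement G i j = of G j := by
  simp [complement, complementWord, hij, h, PresentedMonoid.of]

theorem of_mul_complement (i j : ι) :
    of G i * complement G i j = of G j * complement G j i :=
  PresentedMonoid.mk_eq_mk_of_rel (.intro i j)

theorem commute_of_not_adj (h : ¬G.Adj i j) : Commute (of G i) (of G j) := by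
  by_cases hij : i = j
  · rw [hij]
  · have hrel := of_mul_complement (G := G) i j
    rwa [complement_of_not_adj hij h, complement_of_not_adj (Ne.symm hij) (h ·.symm)] at hrel

theorem braid_of_adj (h : G.Adj i j) :
    of G i * (of G j * of G i) = of G j * (of G i * of G j) := by
  simpa only [complement_of_adj h, complement_of_adj h.symm] using of_mul_complement (G := G) i j

theorem of_mul_of_mul (h : ¬G.Adj i j) (a : ArtinMonoid G) :
    of G i * (of G j * a) = of G j * (of G i * a) :=
  (commute_of_not_adj h).left_comm a

theorem of_mul_of_mul_of_mul (h : G.Adj i j) (a : ArtinMonoid G) :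
    of G i * (of G j * (of G i * a)) = of G j * (of G i * (of G j * a)) := by
  simpa only [mul_assoc] using congrArg (· * a) (braid_of_adj h)

/-- The homomorphism out of the Artin monoid determined by images of the generators that satisfy
the commutation and braid relations. -/
def lift {M : Type*} [Monoid M] (f : ι → M) (hcomm : ∀ i j, ¬G.Adj i j → Commute (f i) (f j))
    (hbraid : ∀ i j, G.Adj i j → f i * (f j * f i) = f j * (f i * f j)) : ArtinMonoid G →* M :=
  PresentedMonoid.lift f <| by
    rintro _ _ ⟨i, j⟩
    simp only [complementWord, eq_comm (a := j), G.adj_comm j]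
    split_ifs with hij hadj
    · rw [hij]
    · simpa using hbraid i j hadj
    · simpa using (hcomm i j hadj).eq

theorem lift_of {M : Type*} [Monoid M] (f : ι → M)
    (hcomm : ∀ i j, ¬G.Adj i j → Commute (f i) (f j))
    (hbraid : ∀ i j, G.Adj i j → f i * (f j * f i) = f j * (f i * f j)) (i : ι) :
    lift f hcomm hbraid (of G i) = f i :=
  PresentedMonoid.lift_of _ _

/-- The length of the words representing an element, as a homomorphism. -/
def lengthHom (G : SimpleGraph ι) : ArtinMonoid G →* Multiplicative ℕ :=
  lift (fun _ => .ofAdd 1) (fun _ _ _ => .refl _) fun _ _ _ => rfl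

/-- The length of the words representing an element. -/
def length (a : ArtinMonoid G) : ℕ := (lengthHom G a).toAdd

theorem length_one : length (1 : ArtinMonoid G) = 0 := rfl

theorem length_of (i : ι) : length (of G i) = 1 := rfl

theorem length_mul (a b : ArtinMonoid G) : length (a * b) = length a + length b := by
  simp [length]

theorem length_mk (w : FreeMonoid ι) : length (mk G w) = w.length := by
  induction w using FreeMonoid.inductionOn' with
  | one => rfl
  | of_mul i w ih => rw [map_mul, length_mul, ih, FreeMonoid.length_mul]; rfl

/-- The equality `of G i * a = of G j * b` is explained by `of_mul_complement`. -/
def FactorsThroughLcm (i : ι) (a : ArtinMonoid G) (j : ι) (b : ArtinMonoid G) : Prop :=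
  ∃ c, a = complement G i j * c ∧ b = complement G j i * c

namespace FactorsThroughLcm

variable {a b : ArtinMonoid G}

theorem self_iff : FactorsThroughLcm i a i b ↔ a = b := by
  simp [FactorsThroughLcm, complement_self, eq_comm]

theorem iff_of_adj (h : G.Adj i j) : FactorsThroughLcm i a j b ↔
    ∃ c, a = of G j * (of G i * c) ∧ b = of G i * (of G j * c) := by
  simp only [FactorsThroughLcm, complement_of_adj h, complement_of_adj h.symm, mul_assoc]

theorem iff_of_not_adj (hij : i ≠ j) (h : ¬G.Adj i j) :
    FactorsThroughLcm i a j b ↔ ∃ c, a = of G j * c ∧ b = of G i * c := by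
  simp only [FactorsThroughLcm, complement_of_not_adj hij h,
    complement_of_not_adj hij.symm (h ·.symm)]

theorem symm (h : FactorsThroughLcm i a j b) : FactorsThroughLcm j b i a := by
  obtain ⟨c, ha, hb⟩ := h
  exact ⟨c, hb, ha⟩

theorem mul_right (h : FactorsThroughLcm i a j b) (x : ArtinMonoid G) :
    FactorsThroughLcm i (a * x) j (b * x) := by
  obtain ⟨c, rfl, rfl⟩ := h
  exact ⟨c * x, mul_assoc _ _ _, mul_assoc _ _ _⟩

end FactorsThroughLcm

/-- Garside's key lemma for the elements of length at most `N`: their equalities between words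
starting with different generators all factor through least common multiples. -/
def KeyLemmaUpTo (G : SimpleGraph ι) (N : ℕ) : Prop :=
  ∀ ⦃i j : ι⦄ ⦃a b : ArtinMonoid G⦄, length (of G i * a) ≤ N → of G i * a = of G j * b →
    FactorsThroughLcm i a j b

namespace KeyLemmaUpTo

variable {N : ℕ} {a b c : ArtinMonoid G} (H : KeyLemmaUpTo G N)
include H

theorem cancel (ha : length (of G i * a) ≤ N) (h : of G i * a = of G i * b) : a = b :=
  FactorsThroughLcm.self_iff.1 (H ha h)

theorem factorsThroughLcm_of_not_adj_of_not_adj (hki : ¬G.Adj k i) (hkj : ¬G.Adj k j)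
    (hN : length (of G i * a) ≤ N) (h : of G i * a = of G j * b) :
    FactorsThroughLcm i (of G k * a) j (of G k * b) := by
  have hcomm (i j : ι) (hi : ¬G.Adj k i) (hj : ¬G.Adj k j) :
      Commute (of G k) (complement G i j) := by
    by_cases hij : i = j
    · simp [hij, complement_self]
    by_cases hadj : G.Adj i j
    · simpa only [complement_of_adj hadj] using
        (commute_of_not_adj hj).mul_right (commute_of_not_adj hi)
    · simpa only [complement_of_not_adj hij hadj] using commute_of_not_adj hj
  obtain ⟨c, rfl, rfl⟩ := H hN h
  exact ⟨of G k * c, (hcomm i j hki hkj).left_comm c, (hcomm j i hkj hki).left_comm c⟩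

theorem factorsThroughLcm_of_not_adj_of_adj (hik : i ≠ k) (hki : ¬G.Adj k i) (hkj : G.Adj k j)
    (hN : length (of G i * a) ≤ N) (h : of G i * a = of G j * (of G k * b)) :
    FactorsThroughLcm i (of G k * a) j (of G k * (of G j * b)) := by
  have hij : i ≠ j := by rintro rfl; exact hki hkj
  have hf := H hN h
  rw [length_mul, length_of] at hN
  by_cases hadj : G.Adj i j
  · obtain ⟨d, rfl, hb⟩ := (FactorsThroughLcm.iff_of_adj hadj).1 hf
    simp only [length_mul, length_of] at hN
    obtain ⟨e, he, rfl⟩ := (FactorsThroughLcm.iff_of_not_adj hik (hki ·.symm)).1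
      (H (by simp only [length_mul, length_of]; lia) hb.symm)
    obtain ⟨f, rfl, rfl⟩ := (FactorsThroughLcm.iff_of_adj hkj.symm).1
      (H (by simp only [length_mul, length_of]; lia) he)
    refine (FactorsThroughLcm.iff_of_adj hadj).2 ⟨of G k * (of G j * (of G i * f)), ?_, ?_⟩
    · rw [← of_mul_of_mul hki, of_mul_of_mul_of_mul hkj, of_mul_of_mul_of_mul hadj.symm,
        of_mul_of_mul hki]
    · rw [of_mul_of_mul_of_mul hadj.symm, of_mul_of_mul hki, ← of_mul_of_mul hki f,
        of_mul_of_mul_of_mul hkj]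
  · obtain ⟨d, rfl, hb⟩ := (FactorsThroughLcm.iff_of_not_adj hij hadj).1 hf
    simp only [length_mul, length_of] at hN
    obtain ⟨e, rfl, rfl⟩ := (FactorsThroughLcm.iff_of_not_adj hik (hki ·.symm)).1
      (H (by simp only [length_mul, length_of]; lia) hb.symm)
    refine (FactorsThroughLcm.iff_of_not_adj hij hadj).2 ⟨of G k * (of G j * e), ?_, ?_⟩
    · rw [of_mul_of_mul_of_mul hkj]
    · rw [← of_mul_of_mul hadj, of_mul_of_mul hki]

theorem factorsThroughLcm_of_adj_of_adj (hij : ¬G.Adj i j) (hki : G.Adj k i) (hkj : G.Adj k j)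
    (hN : length (of G i * (of G k * a)) ≤ N)
    (h : of G i * (of G k * a) = of G j * (of G k * b)) :
    FactorsThroughLcm i (of G k * (of G i * a)) j (of G k * (of G j * b)) := by
  have hf := H hN h
  simp only [length_mul, length_of] at hN
  by_cases heq : i = j
  · subst heq
    rw [FactorsThroughLcm.self_iff] at hf ⊢
    rw [H.cancel (by simp only [length_mul, length_of]; lia) hf]
  obtain ⟨d, ha, hb⟩ := (FactorsThroughLcm.iff_of_not_adj heq hij).1 hf
  obtain ⟨e, rfl, rfl⟩ := (FactorsThroughLcm.iff_of_adj hkj).1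
    (H (by simp only [length_mul, length_of]; lia) ha)
  simp only [length_mul, length_of] at hN
  obtain ⟨f, hef, rfl⟩ := (FactorsThroughLcm.iff_of_adj hki.symm).1
    (H (by simp only [length_mul, length_of]; lia) hb.symm)
  obtain ⟨g, rfl, rfl⟩ := (FactorsThroughLcm.iff_of_not_adj (Ne.symm heq) (hij ·.symm)).1
    (H (by simp only [length_mul, length_of]; lia)
      (H.cancel (by simp only [length_mul, length_of]; lia) hef))
  refine (FactorsThroughLcm.iff_of_not_adj heq hij).2
    ⟨of G k * (of G j * (of G i * (of G k * g))), ?_, ?_⟩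
  · rw [of_mul_of_mul hij, ← of_mul_of_mul_of_mul hki, of_mul_of_mul_of_mul hkj]
  · rw [← of_mul_of_mul hij, ← of_mul_of_mul_of_mul hkj, of_mul_of_mul_of_mul hki,
      of_mul_of_mul hij]

/-- The transitivity step: two factorizations through least common multiples with the same middle
term `of G k * c` compose. This is where triangles matter: three pairwise adjacent generators have
no common multiple. -/
theorem factorsThroughLcm_of_complement_mul_eq (hG : G.CliqueFree 3)
    (hN : length (complement G k i * a) ≤ N) (h : complement G k i * a = complement G k j * b) :
    FactorsThroughLcm i (complement G i k * a) j (complement G j k * b) := by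
  by_cases hki : k = i
  · subst hki
    exact ⟨b, by simpa [complement_self] using h, rfl⟩
  by_cases hkj : k = j
  · subst hkj
    exact ⟨a, rfl, by simpa [complement_self] using h.symm⟩
  have hN' : length (complement G k j * b) ≤ N := h ▸ hN
  by_cases hadji : G.Adj k i <;> by_cases hadjj : G.Adj k j
  · have hij : ¬G.Adj i j := fun hij =>
      hG {k, i, j} (SimpleGraph.is3Clique_triple_iff.2 ⟨hadji, hadjj, hij⟩)
    simp only [complement_of_adj, hadji, hadjj, hadji.symm, hadjj.symm, mul_assoc] at hN h ⊢
    exact H.factorsThroughLcm_of_adj_of_adj hij hadji hadjj hN h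
  · rw [complement_of_not_adj hkj hadjj, complement_of_adj hadji, mul_assoc] at h
    rw [complement_of_not_adj hkj hadjj] at hN'
    rw [complement_of_not_adj (Ne.symm hkj) (hadjj ·.symm), complement_of_adj hadji.symm, mul_assoc]
    exact (H.factorsThroughLcm_of_not_adj_of_adj (Ne.symm hkj) hadjj hadji hN' h.symm).symm
  · rw [complement_of_not_adj hki hadji, complement_of_adj hadjj, mul_assoc] at h
    rw [complement_of_not_adj hki hadji] at hN
    rw [complement_of_not_adj (Ne.symm hki) (hadji ·.symm), complement_of_adj hadjj.symm, mul_assoc]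
    exact H.factorsThroughLcm_of_not_adj_of_adj (Ne.symm hki) hadji hadjj hN h
  · rw [complement_of_not_adj hki hadji] at hN h
    rw [complement_of_not_adj hkj hadjj] at h
    rw [complement_of_not_adj (Ne.symm hki) (hadji ·.symm),
      complement_of_not_adj (Ne.symm hkj) (hadjj ·.symm)]
    exact H.factorsThroughLcm_of_not_adj_of_not_adj hadji hadjj hN h

end KeyLemmaUpTo

/-- If the words `u` and `v` are nonempty, their equality factors through the least common
multiple of their first letters. -/
def HeadsFactor (G : SimpleGraph ι) (u v : FreeMonoid ι) : Prop :=
  ∀ ⦃i j : ι⦄ ⦃u' v' : FreeMonoid ι⦄, u = .of i * u' → v = .of j * v' →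
    FactorsThroughLcm i (mk G u') j (mk G v')

theorem freeMonoid_of_mul_inj {i j : ι} {u v : FreeMonoid ι} :
    FreeMonoid.of i * u = .of j * v ↔ i = j ∧ u = v :=
  List.cons_eq_cons

namespace HeadsFactor

variable {u u' v v' w : FreeMonoid ι} {N : ℕ}

theorem of_rel (h : ArtinRel G u v) : HeadsFactor G u v := by
  obtain ⟨i, j⟩ := h
  intro i' j' u' v' hu hv
  obtain ⟨rfl, rfl⟩ := freeMonoid_of_mul_inj.1 hu
  obtain ⟨rfl, rfl⟩ := freeMonoid_of_mul_inj.1 hv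
  exact ⟨1, (mul_one _).symm, (mul_one _).symm⟩

theorem refl (u : FreeMonoid ι) : HeadsFactor G u u := by
  rintro i j u' v' rfl hv
  obtain ⟨rfl, rfl⟩ := freeMonoid_of_mul_inj.1 hv
  exact FactorsThroughLcm.self_iff.2 rfl

theorem symm (h : HeadsFactor G u v) : HeadsFactor G v u :=
  fun _ _ _ _ hv hu => (h hu hv).symm

theorem trans (hG : G.CliqueFree 3) (H : KeyLemmaUpTo G N) (hN : v.length ≤ N + 1)
    (huv : HeadsFactor G u v) (hvw : HeadsFactor G v w) (hone : u = 1 ↔ v = 1) :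
    HeadsFactor G u w := by
  rintro i j u' w' rfl rfl
  cases v using FreeMonoid.casesOn with
  | one => simp at hone
  | of_mul k v =>
    obtain ⟨a, ha, hva⟩ := huv rfl rfl
    obtain ⟨b, hvb, hb⟩ := hvw rfl rfl
    rw [FreeMonoid.length_mul, FreeMonoid.length_of, ← length_mk (G := G), hva] at hN
    rw [ha, hb]
    exact H.factorsThroughLcm_of_complement_mul_eq hG (by lia) (hva.symm.trans hvb)

theorem mul (huv : HeadsFactor G u v) (huv' : HeadsFactor G u' v') (hone : u = 1 ↔ v = 1)
    (hmk : mk G u' = mk G v') : HeadsFactor G (u * u') (v * v') := by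
  cases u using FreeMonoid.casesOn with
  | one => rwa [hone.1 rfl, one_mul, one_mul]
  | of_mul i u =>
    cases v using FreeMonoid.casesOn with
    | one => simp at hone
    | of_mul j v =>
      intro i' j' a b ha hb
      obtain ⟨rfl, rfl⟩ := freeMonoid_of_mul_inj.1 ((mul_assoc _ _ _).symm.trans ha)
      obtain ⟨rfl, rfl⟩ := freeMonoid_of_mul_inj.1 ((mul_assoc _ _ _).symm.trans hb)
      rw [map_mul, map_mul, hmk]
      exact (huv rfl rfl).mul_right _

end HeadsFactor

theorem length_eq_of_mk_eq_mk {u v : FreeMonoid ι} (h : mk G u = mk G v) :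
    u.length = v.length := by
  rw [← length_mk (G := G) u, h, length_mk]

theorem KeyLemmaUpTo.headsFactor_of_conGenRel {N : ℕ} (H : KeyLemmaUpTo G N)
    (hG : G.CliqueFree 3) {u v : FreeMonoid ι} (h : ConGen.Rel (ArtinRel G) u v)
    (hN : u.length ≤ N + 1) : HeadsFactor G u v := by
  have length_eq {u v} (h : ConGen.Rel (ArtinRel G) u v) : u.length = v.length :=
    length_eq_of_mk_eq_mk (PresentedMonoid.mk_eq_mk_iff.2 h)
  have eq_one_iff {u v} (h : ConGen.Rel (ArtinRel G) u v) : u = 1 ↔ v = 1 := by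
    rw [← FreeMonoid.length_eq_zero, length_eq h, FreeMonoid.length_eq_zero]
  induction h with
  | of u v h => exact .of_rel h
  | refl u => exact .refl u
  | symm h ih => exact (ih ((length_eq h).trans_le hN)).symm
  | trans huv _ ihuv ihvw =>
    have hN' := (length_eq huv).symm.trans_le hN
    exact (ihuv hN).trans hG H hN' (ihvw hN') (eq_one_iff huv)
  | mul h h' ih ih' =>
    rw [FreeMonoid.length_mul] at hN
    exact (ih (by lia)).mul (ih' (by lia)) (eq_one_iff h) (PresentedMonoid.mk_eq_mk_iff.2 h')

theorem keyLemmaUpTo (hG : G.CliqueFree 3) (N : ℕ) : KeyLemmaUpTo G N := by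
  induction N with
  | zero =>
    intro i j a b hN
    simp [length_mul, length_of] at hN
  | succ N ih =>
    intro i j a b hN h
    induction a using PresentedMonoid.inductionOn with | _ u
    induction b using PresentedMonoid.inductionOn with | _ v
    have hmk : mk G (.of i * u) = mk G (.of j * v) := h
    have hlen : (FreeMonoid.of i * u).length ≤ N + 1 := by rwa [← length_mk (G := G)]
    exact ih.headsFactor_of_conGenRel hG (PresentedMonoid.mk_eq_mk_iff.1 hmk) hlen rfl rfl

theorem factorsThroughLcm_of_of_mul_eq (hG : G.CliqueFree 3) {a b : ArtinMonoid G}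
    (h : of G i * a = of G j * b) : FactorsThroughLcm i a j b :=
  keyLemmaUpTo hG _ le_rfl h

theorem isLeftCancelMul (hG : G.CliqueFree 3) : IsLeftCancelMul (ArtinMonoid G) where
  mul_left_cancel a := by
    intro b c h
    induction a using PresentedMonoid.inductionOn with | _ w
    induction w using FreeMonoid.inductionOn' with
    | one => simpa using h
    | of_mul i w ih =>
      simp only [map_mul, mul_assoc] at h
      exact ih (FactorsThroughLcm.self_iff.1 (factorsThroughLcm_of_of_mul_eq hG h))

theorem eq_one_or_exists_eq_of_mul (a : ArtinMonoid G) : a = 1 ∨ ∃ i b, a = of G i * b := by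
  induction a using PresentedMonoid.inductionOn with | _ w
  cases w using FreeMonoid.casesOn with
  | one => exact .inl rfl
  | of_mul i w => exact .inr ⟨i, mk G w, rfl⟩

theorem eq_one_of_mul_eq_one {a b : ArtinMonoid G} (h : a * b = 1) : a = 1 := by
  obtain rfl | ⟨i, c, rfl⟩ := eq_one_or_exists_eq_of_mul a
  · rfl
  · simpa [length_mul, length_of, length_one] using congrArg length h

theorem isLcm_of_of (hG : G.CliqueFree 3) (i j : ι) :
    IsLcm (of G i) (of G j) (of G i * complement G i j) := by
  intro z
  constructor
  · intro h
    exact ⟨dvd_of_mul_right_dvd h, dvd_of_mul_right_dvd (of_mul_complement (G := G) i j ▸ h)⟩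
  · rintro ⟨⟨a, rfl⟩, ⟨b, hb⟩⟩
    obtain ⟨c, rfl, -⟩ := factorsThroughLcm_of_of_mul_eq hG hb
    exact mul_dvd_mul_left _ (dvd_mul_right _ c)

theorem exists_isLcm_of_dvd (hG : G.CliqueFree 3) {a b z : ArtinMonoid G} (ha : a ∣ z)
    (hb : b ∣ z) : ∃ c, IsLcm a b c := by
  have := isLeftCancelMul hG
  induction hn : length z using Nat.strong_induction_on generalizing a b z with | _ n ih
  obtain rfl | ⟨i, a, rfl⟩ := eq_one_or_exists_eq_of_mul a
  · exact ⟨b, isLcm_one_left b⟩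
  obtain rfl | ⟨j, b, rfl⟩ := eq_one_or_exists_eq_of_mul b
  · exact ⟨_, isLcm_one_right _⟩
  have hij := isLcm_of_of hG i j
  obtain ⟨y, rfl⟩ := (hij z).2 ⟨dvd_of_mul_right_dvd ha, dvd_of_mul_right_dvd hb⟩
  rw [mul_assoc, mul_dvd_mul_left_iff] at ha
  rw [of_mul_complement, mul_assoc, mul_dvd_mul_left_iff] at hb
  have hn' := congrArg length (of_mul_complement (G := G) i j)
  simp only [length_mul, length_of] at hn hn'
  have exists_lcm {a p : ArtinMonoid G} (hp : length p + length y < n) (ha : a ∣ p * y) :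
      ∃ c, IsLcm a p (p * c) ∧ c ∣ y := by
    obtain ⟨c, hc⟩ := ih _ hp ha (dvd_mul_right p y) (length_mul p y)
    obtain ⟨c, rfl⟩ := ((hc c).1 dvd_rfl).2
    exact ⟨c, hc, mul_dvd_mul_left_iff.1 ((hc _).2 ⟨ha, dvd_mul_right p y⟩)⟩
  obtain ⟨c, hc, hcy⟩ := exists_lcm (by lia) ha
  obtain ⟨d, hd, hdy⟩ := exists_lcm (by lia) hb
  obtain ⟨e, he⟩ := ih (length y) (by lia) hcy hdy rfl
  exact ⟨_, hij.mul rfl (of_mul_complement i j).symm hc hd he⟩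

end ArtinMonoid

end ArtinMonoid

namespace Garside

section Mrange

variable {M H : Type*} [Monoid M] [Group H] {f : M →* H} (hf : Function.Injective f)
include hf

theorem isPrefix_mrange_iff {a b : M} :
    IsPrefix (MonoidHom.mrange f) (f a) (f b) ↔ a ∣ b := by
  rw [IsPrefix, MonoidHom.mem_mrange]
  refine exists_congr fun c => ?_
  rw [eq_inv_mul_iff_mul_eq, ← map_mul, hf.eq_iff, eq_comm]

theorem isGarsideElement_mrange {δ : M} (hδ : ∀ a, ∃ b, SemiconjBy δ a b ∧ SemiconjBy δ b a)
    (hone : ∀ a b : M, a * b = 1 → a = 1) (hlcm : ∀ a b : M, ∃ c, IsLcm a b c) :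
    IsGarsideElement (MonoidHom.mrange f) (f δ) where
  mem := ⟨δ, rfl⟩
  mem_normalizer := by
    refine Subgroup.mem_set_normalizer_iff.2 fun x => ?_
    constructor
    · rintro ⟨a, rfl⟩
      obtain ⟨b, hab, -⟩ := hδ a
      exact ⟨b, eq_mul_inv_of_mul_eq (hab.map f).eq.symm⟩
    · rintro ⟨a, ha⟩
      obtain ⟨b, -, hba⟩ := hδ a
      refine ⟨b, mul_left_cancel (a := f δ) ?_⟩
      rw [(hba.map f).eq, ha, inv_mul_cancel_right]
  eq_one_of_inv_mem := by
    rintro _ ⟨a, rfl⟩ ⟨b, hb⟩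
    rw [hone a b (hf (by rw [map_mul, hb, mul_inv_cancel, map_one])), map_one]
  exists_lcm := by
    rintro _ _ ⟨a, rfl⟩ ⟨b, rfl⟩
    obtain ⟨c, hc⟩ := hlcm a b
    have mem_of_isPrefix {a : M} {z : H} (h : IsPrefix (MonoidHom.mrange f) (f a) z) :
        ∃ y, f y = z := by
      obtain ⟨y, hy⟩ := h
      exact ⟨a * y, by rw [map_mul, hy, mul_inv_cancel_left]⟩
    refine ⟨f c, fun z => ⟨fun h => ?_, fun h => ?_⟩⟩
    · obtain ⟨y, rfl⟩ := mem_of_isPrefix h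
      simpa only [isPrefix_mrange_iff hf] using (hc y).1 ((isPrefix_mrange_iff hf).1 h)
    · obtain ⟨y, rfl⟩ := mem_of_isPrefix h.1
      simpa only [isPrefix_mrange_iff hf, hc y] using h

end Mrange

end Garside

/-! ### The half-twist -/

section HalfTwist

variable {M : Type*} [Monoid M]

/-- The ascending product `t 0 * ⋯ * t (k - 1)`. -/
def ascProd (t : ℕ → M) (k : ℕ) : M := ((List.range k).map t).prod

/-- The descending product `t (k - 1) * ⋯ * t 0`. -/
def descProd (t : ℕ → M) (k : ℕ) : M := ((List.range k).reverse.map t).prod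

/-- The half-twist on `k + 1` strands, with `t i` in the role of the `i`-th Artin generator. -/
def halfTwist (t : ℕ → M) (k : ℕ) : M :=
  ((((List.range k).map fun k => (List.range (k + 1)).reverse).flatten).map t).prod

theorem map_halfTwist {N : Type*} [Monoid N] (f : M →* N) (t : ℕ → M) (k : ℕ) :
    f (halfTwist t k) = halfTwist (f ∘ t) k := by
  rw [halfTwist, map_list_prod, List.map_map, halfTwist]

theorem ascProd_succ (t : ℕ → M) (k : ℕ) : ascProd t (k + 1) = ascProd t k * t k := by
  simp [ascProd, List.range_succ]

theorem descProd_succ (t : ℕ → M) (k : ℕ) : descProd t (k + 1) = t k * descProd t k := by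
  simp [descProd, List.range_succ]

theorem halfTwist_succ (t : ℕ → M) (k : ℕ) :
    halfTwist t (k + 1) = halfTwist t k * descProd t (k + 1) := by
  rw [halfTwist, List.range_succ, List.map_append, List.flatten_append, List.map_append,
    List.prod_append]
  simp [halfTwist, descProd]

theorem dvd_ascProd_succ (t : ℕ → M) (k : ℕ) : t 0 ∣ ascProd t (k + 1) := by
  simp [ascProd, List.range_succ_eq_map]

/-- A sequence whose terms with index less than `N` satisfy the braid relations. -/
structure IsBraidSequence (t : ℕ → M) (N : ℕ) : Prop where
  braid : ∀ ⦃i⦄, i + 1 < N → t i * (t (i + 1) * t i) = t (i + 1) * (t i * t (i + 1))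
  commute : ∀ ⦃i j⦄, i + 2 ≤ j → j < N → Commute (t i) (t j)

namespace IsBraidSequence

variable {t : ℕ → M} {N i j k : ℕ} (h : IsBraidSequence t N)
include h

theorem commute_prod {l : List ℕ} (hl : ∀ i ∈ l, i + 2 ≤ j) (hj : j < N) :
    Commute (l.map t).prod (t j) :=
  Commute.list_prod_left _ _ (List.forall_mem_map.2 fun i hi => h.commute (hl i hi) hj)

theorem commute_ascProd (hkj : k < j) (hj : j < N) : Commute (ascProd t k) (t j) :=
  h.commute_prod (fun i hi => by have := List.mem_range.1 hi; lia) hj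

theorem commute_descProd (hkj : k < j) (hj : j < N) : Commute (descProd t k) (t j) :=
  h.commute_prod (fun i hi => by have := List.mem_range.1 (List.mem_reverse.1 hi); lia) hj

theorem commute_halfTwist (hkj : k < j) (hj : j < N) : Commute (halfTwist t k) (t j) :=
  h.commute_prod (fun i hi => by simp at hi; lia) hj

theorem halfTwist_succ' (hk : k < N) :
    halfTwist t (k + 1) = ascProd t (k + 1) * halfTwist t k := by
  induction k with
  | zero => simp [halfTwist, ascProd]
  | succ k ih =>
    calc halfTwist t (k + 2)
        = ascProd t (k + 1) * halfTwist t k * (t (k + 1) * descProd t (k + 1)) := by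
          rw [halfTwist_succ, ih (by lia), descProd_succ]
      _ = ascProd t (k + 1) * t (k + 1) * (halfTwist t k * descProd t (k + 1)) := by
          simp only [mul_assoc, (h.commute_halfTwist (Nat.lt_succ_self k) hk).left_comm]
      _ = ascProd t (k + 2) * halfTwist t (k + 1) := by
          rw [← ascProd_succ, ← halfTwist_succ]

theorem semiconjBy_ascProd (hi : i + 1 < k) (hk : k ≤ N) :
    SemiconjBy (ascProd t k) (t i) (t (i + 1)) := by
  induction k with
  | zero => lia
  | succ k ih =>
    rcases Nat.lt_succ_iff_lt_or_eq.1 hi with hik | rfl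
    · rw [ascProd_succ]
      exact (ih hik (by lia)).mul_left (h.commute (by lia) hk).symm
    · have hbraid : SemiconjBy (t i * t (i + 1)) (t i) (t (i + 1)) :=
        (mul_assoc _ _ _).trans (h.braid hk)
      rw [ascProd_succ, ascProd_succ, mul_assoc]
      exact SemiconjBy.mul_left (h.commute_ascProd (Nat.lt_succ_self i) hk) hbraid

theorem semiconjBy_descProd (hi : i + 1 < k) (hk : k ≤ N) :
    SemiconjBy (descProd t k) (t (i + 1)) (t i) := by
  induction k with
  | zero => lia
  | succ k ih =>
    rcases Nat.lt_succ_iff_lt_or_eq.1 hi with hik | rfl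
    · rw [descProd_succ]
      exact SemiconjBy.mul_left (h.commute (by lia) hk).symm (ih hik (by lia))
    · have hbraid : SemiconjBy (t (i + 1) * t i) (t (i + 1)) (t i) :=
        (mul_assoc _ _ _).trans (h.braid hk).symm
      rw [descProd_succ, descProd_succ, ← mul_assoc]
      exact hbraid.mul_left (h.commute_descProd (Nat.lt_succ_self i) hk)

theorem semiconjBy_halfTwist (hij : i + j + 1 = k) (hk : k ≤ N) :
    SemiconjBy (halfTwist t k) (t j) (t i) := by
  induction k generalizing i j with
  | zero => lia
  | succ k ih =>
    rcases i with _ | i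
    · obtain rfl : j = k := by lia
      rcases j with _ | j
      · simp [halfTwist, SemiconjBy]
      · rw [halfTwist_succ]
        exact (ih (by lia) (by lia)).mul_left (h.semiconjBy_descProd (by lia) hk)
    · rw [h.halfTwist_succ' hk]
      exact (h.semiconjBy_ascProd (by lia) hk).mul_left (ih (by lia) (by lia))

theorem dvd_halfTwist (hi : i < k) (hk : k ≤ N) : t i ∣ halfTwist t k := by
  induction k generalizing i with
  | zero => lia
  | succ k ih =>
    rw [h.halfTwist_succ' hk]
    rcases i with _ | i
    · exact (dvd_ascProd_succ t k).mul_right _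
    · obtain ⟨a, ha⟩ := ih (i := i) (by lia) (by lia)
      rw [ha, ← mul_assoc, (h.semiconjBy_ascProd (by lia) hk).eq, mul_assoc]
      exact dvd_mul_right _ _

end IsBraidSequence

end HalfTwist

/-! ### Embedding monoids in groups -/

section GroupEmbedding

universe u

variable {M : Type u} [Monoid M]

theorem mul_dvd_mul_of_forall_commute {a b x y : M} (hy : ∀ c, Commute y c) (ha : a ∣ x)
    (hb : b ∣ y) : a * b ∣ x * y := by
  obtain ⟨c, rfl⟩ := ha
  rw [mul_assoc, ← hy c]
  exact mul_dvd_mul_left a (hb.mul_right c)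

/-- The powers of a central element form an Ore set. -/
abbrev oreSetPowers {z : M} (hz : ∀ a, Commute z a) :
    OreLocalization.OreSet (Submonoid.powers z) :=
  have hcomm (a : M) (s : Submonoid.powers z) : (s : M) * a = a * s := by
    obtain ⟨k, hk⟩ := s.2
    exact hk ▸ (hz a).pow_left k
  { ore_right_cancel := fun a b s hs => ⟨s, by rw [hcomm, hs, hcomm]⟩
    oreNum := fun a _ => a
    oreDenom := fun _ s => s
    ore_eq := fun a s => hcomm a s }

variable [IsLeftCancelMul M]

theorem commute_of_commute_mul {a b : M} (h : Commute a (a * b)) : Commute a b :=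
  mul_left_cancel (h.eq.trans (mul_assoc a b a))

/-- The group is that of the units of the localization at the powers of `z`. -/
theorem exists_injective_hom_group {z : M} (hz : ∀ a, Commute z a)
    (hdvd : ∀ a, ∃ k : ℕ, a ∣ z ^ k) :
    ∃ (H : Type u) (_ : Group H) (f : M →* H), Function.Injective f := by
  let := oreSetPowers hz
  let f : M →* OreLocalization (Submonoid.powers z) M := OreLocalization.numeratorHom
  have hinj : Function.Injective f := by
    intro a b hab
    obtain ⟨u, v, huv, huv'⟩ := OreLocalization.oreDiv_eq_iff.1 hab
    simp only [Submonoid.smul_def, smul_eq_mul, OneMemClass.coe_one, mul_one] at huv huv'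
    exact (mul_left_cancel (huv.trans (congrArg (· * a) huv'.symm))).symm
  have hunit (a : M) : IsUnit (f a) := by
    obtain ⟨k, b, hb⟩ := hdvd a
    have hab : Commute a b := commute_of_commute_mul (hb ▸ ((hz a).pow_left k).symm)
    have hzk : IsUnit (f (z ^ k)) :=
      OreLocalization.numerator_isUnit (⟨z ^ k, k, rfl⟩ : Submonoid.powers z)
    rw [hb, map_mul, (hab.map f).isUnit_mul_iff] at hzk
    exact hzk.1
  exact ⟨_, inferInstance, IsUnit.liftRight f hunit,
    fun a b hab => hinj (congrArg Units.val hab)⟩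

end GroupEmbedding

/-! ### The braid group -/

/-- The monoid presented by the generators and relations of `Braid n`. -/
abbrev BraidMonoid (n : ℕ) := ArtinMonoid (SimpleGraph.pathGraph (n - 1))

namespace BraidMonoid

variable {n : ℕ}

theorem cliqueFree_pathGraph (k : ℕ) : (SimpleGraph.pathGraph k).CliqueFree 3 :=
  SimpleGraph.cliqueFree_hasse_three

/-- The generator with index `i`, with out-of-range indices mapped to `1`. -/
def gen (n i : ℕ) : BraidMonoid n := if h : i < n - 1 then .of _ ⟨i, h⟩ else 1

theorem gen_val (i : Fin (n - 1)) : gen n i = .of _ i := dif_pos i.2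

theorem isBraidSequence_gen (n : ℕ) : IsBraidSequence (gen n) (n - 1) where
  braid i hi := by
    rw [gen, gen, dif_pos hi, dif_pos (by lia)]
    exact ArtinMonoid.braid_of_adj (SimpleGraph.pathGraph_adj.2 (.inl rfl))
  commute i j hij hj := by
    rw [gen, gen, dif_pos hj, dif_pos (by lia)]
    refine ArtinMonoid.commute_of_not_adj fun h => ?_
    rcases SimpleGraph.pathGraph_adj.1 h with h | h <;> simp only at h <;> lia

/-- The half-twist of the braid monoid. -/
def garside (n : ℕ) : BraidMonoid n := halfTwist (gen n) (n - 1)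

theorem semiconjBy_garside_of (i : Fin (n - 1)) :
    SemiconjBy (garside n) (.of _ i) (.of _ i.rev) := by
  rw [← gen_val, ← gen_val]
  exact (isBraidSequence_gen n).semiconjBy_halfTwist (by rw [Fin.val_rev]; lia) le_rfl

theorem exists_semiconjBy_garside (a : BraidMonoid n) :
    ∃ b, SemiconjBy (garside n) a b ∧ SemiconjBy (garside n) b a := by
  induction a using PresentedMonoid.inductionOn with | _ w
  induction w using FreeMonoid.inductionOn' with
  | one => exact ⟨1, .one_right _, .one_right _⟩
  | of_mul i w ih =>
    obtain ⟨b, hb, hb'⟩ := ih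
    have hrev := semiconjBy_garside_of i.rev
    rw [Fin.rev_rev] at hrev
    exact ⟨_, (semiconjBy_garside_of i).mul_right hb, hrev.mul_right hb'⟩

theorem commute_garside_sq (a : BraidMonoid n) : Commute (garside n ^ 2) a := by
  obtain ⟨b, hab, hba⟩ := exists_semiconjBy_garside a
  rw [pow_two]
  exact hba.mul_left hab

theorem of_dvd_garside_sq (i : Fin (n - 1)) : .of _ i ∣ garside n ^ 2 := by
  rw [← gen_val]
  exact ((isBraidSequence_gen n).dvd_halfTwist i.2 le_rfl).trans (dvd_pow_self _ two_ne_zero)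

theorem exists_dvd_garside_sq_pow (a : BraidMonoid n) : ∃ k : ℕ, a ∣ (garside n ^ 2) ^ k := by
  induction a using PresentedMonoid.inductionOn with | _ w
  induction w using FreeMonoid.inductionOn' with
  | one => exact ⟨0, one_dvd _⟩
  | of_mul i w ih =>
    obtain ⟨k, hk⟩ := ih
    refine ⟨k + 1, ?_⟩
    rw [pow_succ']
    exact mul_dvd_mul_of_forall_commute (fun a => (commute_garside_sq a).pow_left k)
      (of_dvd_garside_sq i) hk

theorem exists_isLcm (a b : BraidMonoid n) : ∃ c, IsLcm a b c := by
  obtain ⟨k, hk⟩ := exists_dvd_garside_sq_pow a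
  obtain ⟨m, hm⟩ := exists_dvd_garside_sq_pow b
  exact ArtinMonoid.exists_isLcm_of_dvd (cliqueFree_pathGraph _)
    (hk.trans (pow_dvd_pow _ (le_max_left k m))) (hm.trans (pow_dvd_pow _ (le_max_right k m)))

theorem commute_σ_of_not_adj {i j : Fin (n - 1)}
    (h : ¬(SimpleGraph.pathGraph (n - 1)).Adj i j) : Commute (σ i : Braid n) (σ j) := by
  have commute_of_add_two_le {i j : Fin (n - 1)} (hij : (i : ℕ) + 2 ≤ j) :
      Commute (σ i : Braid n) (σ j) :=
    PresentedGroup.mk_eq_mk_of_mul_inv_mem (.inr ⟨i, j, hij, rfl⟩)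
  rw [SimpleGraph.pathGraph_adj] at h
  obtain hij | hij | rfl : (i : ℕ) + 2 ≤ j ∨ (j : ℕ) + 2 ≤ i ∨ i = j := by lia
  exacts [commute_of_add_two_le hij, (commute_of_add_two_le hij).symm, .refl _]

theorem braid_σ_of_adj {i j : Fin (n - 1)} (h : (SimpleGraph.pathGraph (n - 1)).Adj i j) :
    (σ i * (σ j * σ i) : Braid n) = σ j * (σ i * σ j) := by
  have braid_of_succ {i j : Fin (n - 1)} (hij : (i : ℕ) + 1 = j) :
      (σ i * (σ j * σ i) : Braid n) = σ j * (σ i * σ j) := by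
    simp only [← mul_assoc]
    exact PresentedGroup.mk_eq_mk_of_mul_inv_mem (.inl ⟨i, j, hij, rfl⟩)
  rcases SimpleGraph.pathGraph_adj.1 h with hij | hij
  exacts [braid_of_succ hij, (braid_of_succ hij).symm]

/-- The canonical homomorphism to the braid group. -/
def toBraid (n : ℕ) : BraidMonoid n →* Braid n :=
  ArtinMonoid.lift σ (fun _ _ => commute_σ_of_not_adj) fun _ _ => braid_σ_of_adj

theorem toBraid_of (i : Fin (n - 1)) : toBraid n (.of _ i) = σ i :=
  ArtinMonoid.lift_of _ _ _ i

theorem exists_comp_toBraid_eq {H : Type*} [Group H] (f : BraidMonoid n →* H) :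
    ∃ g : Braid n →* H, g.comp (toBraid n) = f := by
  have hrel : ∀ r ∈ braidRels n, FreeGroup.lift (fun i => f (.of _ i)) r = 1 := by
    rintro r (⟨i, j, hij, rfl⟩ | ⟨i, j, hij, rfl⟩)
    · rw [map_mul, map_inv, mul_inv_eq_one]
      have hbraid := ArtinMonoid.braid_of_adj (SimpleGraph.pathGraph_adj.2 (.inl hij))
      simpa [mul_assoc] using congrArg f hbraid
    · rw [map_mul, map_inv, mul_inv_eq_one]
      have hadj : ¬(SimpleGraph.pathGraph (n - 1)).Adj i j := by
        rw [SimpleGraph.pathGraph_adj]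
        lia
      simpa using congrArg f (ArtinMonoid.commute_of_not_adj hadj).eq
  refine ⟨PresentedGroup.toGroup hrel, PresentedMonoid.ext _ fun i => ?_⟩
  rw [MonoidHom.comp_apply, toBraid_of]
  exact PresentedGroup.toGroup.of hrel

theorem toBraid_injective (n : ℕ) : Function.Injective (toBraid n) := by
  have := ArtinMonoid.isLeftCancelMul (cliqueFree_pathGraph (n - 1))
  obtain ⟨H, _, f, hf⟩ :=
    exists_injective_hom_group (M := BraidMonoid n) commute_garside_sq exists_dvd_garside_sq_pow
  obtain ⟨g, rfl⟩ := exists_comp_toBraid_eq f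
  exact Function.Injective.of_comp (f := g) hf

theorem mrange_toBraid (n : ℕ) : MonoidHom.mrange (toBraid n) = Pos n := by
  rw [MonoidHom.mrange_eq_map, ← PresentedMonoid.closure_range_of, MonoidHom.map_mclosure,
    ← Set.range_comp, Pos]
  exact congrArg (Submonoid.closure ∘ Set.range) (funext toBraid_of)

theorem toBraid_garside (n : ℕ) : toBraid n (garside n) = Δ n := by
  have hgen : toBraid n ∘ gen n = σ' n := by
    funext i
    by_cases hi : i < n - 1
    · simp [gen, σ', hi, toBraid_of]
    · simp [gen, σ', hi]
  rw [garside, map_halfTwist, hgen]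
  rfl

end BraidMonoid

theorem isGarsideElement_Δ (n : ℕ) : Garside.IsGarsideElement (Pos n) (Δ n) := by
  rw [← BraidMonoid.mrange_toBraid, ← BraidMonoid.toBraid_garside]
  exact Garside.isGarsideElement_mrange (BraidMonoid.toBraid_injective n)
    BraidMonoid.exists_semiconjBy_garside (fun _ _ => ArtinMonoid.eq_one_of_mul_eq_one)
    BraidMonoid.exists_isLcm

theorem len_eq_max_of_normal_form_general {G : Type*} [Group G] {P : Submonoid G} {d : G}
    (hd : Garside.IsGarsideElement P d) {x : G} {p : ℤ} {l : List G}
    (h : Garside.IsNormalForm P d x p l) :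
    (Garside.len P d x : ℤ) = max |p| (max (l.length : ℤ) (p + l.length)) ∧
      l.length ≤ Garside.len P d x := by
  obtain ⟨v, hv, hvx, hvlen⟩ := hd.exists_word_zpow_mul p h.2.2.1
  obtain rfl : v.prod = x := hvx.trans h.1.symm
  obtain ⟨w, hw, hwv, hwlen⟩ := Garside.exists_word_length_eq_len hv
  have hupper : Garside.len P d v.prod ≤ v.length := Garside.len_le hv
  have hlower := hd.max_le_length_of_word (hwv ▸ h) hw
  lia

/-- **Lemma (Charney–Meier).** If `x = Δ^p x₁ ⋯ x_r` is the left normal form of `x ∈ B_n`,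
then `|x| = max(|p|, r, p + r)`; in particular `ℓ(x) ≤ |x|`. -/
theorem len_eq_max_of_normal_form (n : ℕ) (x : Braid n) (p : ℤ) (l : List (Braid n))
    (h : IsNormalForm x p l) :
    (len x : ℤ) = max |p| (max (l.length : ℤ) (p + l.length)) ∧ l.length ≤ len x :=
  len_eq_max_of_normal_form_general (isGarsideElement_Δ n) h

end Braids
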